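/- Let X be a metrizable topological space equipped with its Borel σ-algebra, let φ : ℝ → X → X be a continuous flow on X, and let U, V ⊆ X be open sets with U ∩ V = ∅. Assume that for every v ∈ X with v ∉ U and such that {t > 0 : φ_t(v) ∈ U} is nonempty, one has liminf_{T→∞} (1/T)·λ({t ∈ [0, T] : φ_t(v) ∈ U}) ≤ 2/3. Let μ_x and μ_y be φ-invariant Borel probability measures on X that are ergodic for φ and satisfy μ_x(U) = 1 and μ_y(V) = 1. Then the measure μ = (3/4)·μ_x + (1/4)·μ_y is a φ-invariant Borel probability measure that does not belong to the closure, in the topology of weak convergence on Borel probability measures, of the set of φ-invariant Borel probability measures that are ergodic for φ. In particular, the ergodic measures of φ are not dense in the space of φ-invariant Borel probability measures. -/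

import Mathlib

open Set Filter MeasureTheory ENNReal

/-!
Let `κ` bound the frequency of visits to `U` along orbits that start in `V`. By ergodicity almost
every point visits `U` with lower frequency at least `Q U`, so an ergodic `Q` with `Q U > κ` gives
`V` measure zero. Both `Q U > κ` and `Q V > 0` are weakly open conditions on `Q`, hence no measure
satisfying them is a weak limit of ergodic ones; a convex combination of a measure on `U` and one
on `V` satisfies both as soon as the first weight exceeds `κ`.

Only the lower bound of the pointwise ergodic theorem is needed. Suppose that `c < d < Q U` and that
the occupation time of `U` up to time `n` does not outrun `c * n`. Then it is smaller than `d * n`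
for some `n`, i.e. some Birkhoff sum under the time-one map of `d` minus the occupation time up to
time `1` is positive. If this happened almost everywhere, the maximal ergodic theorem would give
`d - Q U ≥ 0`.
-/

section MaximalErgodic

variable {X : Type*} {T : X → X} {h : X → ℝ}

/-- The running maximum `max (S 0 x) … (S n x)` of the Birkhoff sums `S k x` of `h` along the orbit
of `x`. The empty sum `S 0 x = 0` is included, so the running maximum is positive exactly when one
of the sums up to time `n` is. -/
noncomputable def birkhoffMax (T : X → X) (h : X → ℝ) (n : ℕ) (x : X) : ℝ :=
  partialSups (fun k => birkhoffSum T h k x) n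

theorem birkhoffSum_le_birkhoffMax {k n : ℕ} (hkn : k ≤ n) (x : X) :
    birkhoffSum T h k x ≤ birkhoffMax T h n x :=
  le_partialSups_of_le (fun k => birkhoffSum T h k x) hkn

theorem birkhoffMax_nonneg (n : ℕ) (x : X) : 0 ≤ birkhoffMax T h n x :=
  birkhoffSum_le_birkhoffMax n.zero_le x

theorem birkhoffMax_pos_iff {n : ℕ} {x : X} :
    0 < birkhoffMax T h n x ↔ ∃ k ≤ n, 0 < birkhoffSum T h k x := by
  refine ⟨fun hpos => ?_, fun ⟨k, hkn, hk⟩ => hk.trans_le (birkhoffSum_le_birkhoffMax hkn x)⟩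
  obtain ⟨k, hkn, hk⟩ := exists_partialSups_eq (fun k => birkhoffSum T h k x) n
  exact ⟨k, hkn, hk ▸ hpos⟩

theorem birkhoffMax_le_add_birkhoffMax {n : ℕ} {x : X} (hpos : 0 < birkhoffMax T h n x) :
    birkhoffMax T h n x ≤ h x + birkhoffMax T h n (T x) := by
  obtain ⟨k, hkn, hk⟩ : ∃ k ≤ n, birkhoffMax T h n x = birkhoffSum T h k x :=
    exists_partialSups_eq (fun k => birkhoffSum T h k x) n
  rw [hk] at hpos ⊢
  cases k with
  | zero => exact absurd hpos (lt_irrefl _)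
  | succ k =>
    rw [birkhoffSum_succ']
    gcongr
    exact birkhoffSum_le_birkhoffMax (by lia) (T x)

variable [MeasurableSpace X] {μ : Measure X}

theorem integrable_birkhoffSum (hT : MeasurePreserving T μ μ) (hh : Integrable h μ) (n : ℕ) :
    Integrable (birkhoffSum T h n) μ :=
  integrable_finsetSum _ fun k _ => (hT.iterate k).integrable_comp_of_integrable hh

theorem integrable_birkhoffMax (hT : MeasurePreserving T μ μ) (hh : Integrable h μ) (n : ℕ) :
    Integrable (birkhoffMax T h n) μ := by
  induction n with
  | zero => exact integrable_birkhoffSum hT hh 0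
  | succ n ih =>
    have hsup : birkhoffMax T h (n + 1) = birkhoffMax T h n ⊔ birkhoffSum T h (n + 1) :=
      funext fun x => partialSups_add_one (fun k => birkhoffSum T h k x) n
    exact hsup ▸ ih.sup (integrable_birkhoffSum hT hh (n + 1))

theorem nullMeasurableSet_birkhoffMax_pos (hT : MeasurePreserving T μ μ) (hh : Integrable h μ)
    (n : ℕ) : NullMeasurableSet {x | 0 < birkhoffMax T h n x} μ :=
  nullMeasurableSet_lt aemeasurable_const (integrable_birkhoffMax hT hh n).aemeasurable

theorem setIntegral_birkhoffMax_pos_nonneg (hT : MeasurePreserving T μ μ) (hh : Integrable h μ)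
    (n : ℕ) : 0 ≤ ∫ x in {x | 0 < birkhoffMax T h n x}, h x ∂μ := by
  set M := birkhoffMax T h n
  set E := {x | 0 < M x}
  have hE : NullMeasurableSet E μ := nullMeasurableSet_birkhoffMax_pos hT hh n
  have hMint : Integrable M μ := integrable_birkhoffMax hT hh n
  have hMTint : Integrable (fun x => M (T x)) μ := hT.integrable_comp_of_integrable hMint
  have hpointwise (x : X) : M x ≤ E.indicator h x + M (T x) := by
    by_cases hx : x ∈ E
    · rw [indicator_of_mem hx]
      exact birkhoffMax_le_add_birkhoffMax hx
    · rw [indicator_of_notMem hx, zero_add]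
      exact (not_lt.1 hx).trans (birkhoffMax_nonneg n (T x))
  have hinvariance : ∫ x, M (T x) ∂μ = ∫ x, M x ∂μ := by
    rw [← integral_map hT.aemeasurable (hT.map_eq.symm ▸ hMint.aestronglyMeasurable), hT.map_eq]
  have hintegral := integral_mono hMint ((hh.indicator₀ hE).add hMTint) hpointwise
  rw [integral_add' (hh.indicator₀ hE) hMTint, integral_indicator₀ hE, hinvariance] at hintegral
  linarith

theorem setIntegral_exists_birkhoffSum_pos_nonneg (hT : MeasurePreserving T μ μ)
    (hh : Integrable h μ) : 0 ≤ ∫ x in {x | ∃ n, 0 < birkhoffSum T h n x}, h x ∂μ := by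
  set E : ℕ → Set X := fun n => {x | 0 < birkhoffMax T h n x} with hE
  have hEnull (n : ℕ) : NullMeasurableSet (E n) μ := nullMeasurableSet_birkhoffMax_pos hT hh n
  have hEmono : Monotone E := fun m n hmn x hx =>
    let ⟨k, hkm, hk⟩ := birkhoffMax_pos_iff.1 hx
    birkhoffMax_pos_iff.2 ⟨k, hkm.trans hmn, hk⟩
  have hEunion : {x | ∃ n, 0 < birkhoffSum T h n x} = ⋃ n, E n := by
    ext x
    simp only [hE, mem_ofPred_eq, mem_iUnion, birkhoffMax_pos_iff]
    exact ⟨fun ⟨n, hn⟩ => ⟨n, n, le_rfl, hn⟩, fun ⟨_, k, _, hk⟩ => ⟨k, hk⟩⟩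
  have hlim : Tendsto (fun n => ∫ x in E n, h x ∂μ) atTop (nhds (∫ x in ⋃ n, E n, h x ∂μ)) :=
    tendsto_setIntegral_of_monotone₀ hEnull hEmono hh.integrableOn
  rw [hEunion]
  exact ge_of_tendsto' hlim (setIntegral_birkhoffMax_pos_nonneg hT hh)

theorem integral_nonneg_of_ae_exists_birkhoffSum_pos (hT : MeasurePreserving T μ μ)
    (hh : Integrable h μ) (hpos : ∀ᵐ x ∂μ, ∃ n, 0 < birkhoffSum T h n x) :
    0 ≤ ∫ x, h x ∂μ :=
  (setIntegral_exists_birkhoffSum_pos_nonneg hT hh).trans_eq (integral_eq_setIntegral hpos h).symm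

end MaximalErgodic

section OccupationTime

variable {X : Type*} [TopologicalSpace X] {φ : Flow ℝ X} {U : Set X} {v : X}

/-- The time that the orbit of `v` spends in `U` during the time interval `[0, T]`. -/
noncomputable def occupationTime (φ : Flow ℝ X) (U : Set X) (T : ℝ) (v : X) : ℝ :=
  volume.real {t ∈ Icc (0 : ℝ) T | φ t v ∈ U}

theorem occupationTime_nonneg (T : ℝ) : 0 ≤ occupationTime φ U T v :=
  measureReal_nonneg

theorem occupationTime_le {T : ℝ} (hT : 0 ≤ T) : occupationTime φ U T v ≤ T :=
  calc
    occupationTime φ U T v ≤ volume.real (Icc 0 T) :=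
      measureReal_mono (fun _ ht => ht.1) measure_Icc_lt_top.ne
    _ = T := by rw [Real.volume_real_Icc_of_le hT, sub_zero]

theorem occupationTime_mono : Monotone fun T => occupationTime φ U T v := fun _ b hab =>
  measureReal_mono (fun _ ht => ⟨Icc_subset_Icc_right hab ht.1, ht.2⟩)
    (measure_ne_top_of_subset (sep_subset (Icc 0 b) _) measure_Icc_lt_top.ne)

theorem occupationTime_eq_zero (h : ∀ t, 0 ≤ t → φ t v ∉ U) (T : ℝ) :
    occupationTime φ U T v = 0 := by
  have hempty : {t ∈ Icc (0 : ℝ) T | φ t v ∈ U} = ∅ :=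
    eq_empty_of_forall_notMem fun t ht => h t ht.1.1 ht.2
  rw [occupationTime, hempty, measureReal_empty]

variable [MeasurableSpace X] [BorelSpace X]

theorem occupationTime_add (hU : MeasurableSet U) {s T : ℝ} (hs : 0 ≤ s) (hT : 0 ≤ T) :
    occupationTime φ U (s + T) v = occupationTime φ U s v + occupationTime φ U T (φ s v) := by
  set W : Set ℝ := {t | φ t v ∈ U}
  have hW : MeasurableSet W := (φ.continuous continuous_id continuous_const).measurable hU
  have hsplit : Icc 0 (s + T) ∩ W = (Icc 0 s ∩ W) ∪ (Ioc s (s + T) ∩ W) := by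
    rw [← union_inter_distrib_right, Icc_union_Ioc_eq_Icc hs (by linarith)]
  have hdisjoint : Disjoint (Icc 0 s ∩ W) (Ioc s (s + T) ∩ W) :=
    disjoint_left.2 fun t ht ht' => ht.1.2.not_gt ht'.1.1
  have hshift : (fun t => t + s) ⁻¹' (Icc s (s + T) ∩ W) = {t ∈ Icc 0 T | φ t (φ s v) ∈ U} := by
    ext t
    simp [W, φ.map_add, add_comm s T]
  have htail : volume.real (Ioc s (s + T) ∩ W) = occupationTime φ U T (φ s v) := by
    rw [measureReal_congr (Ioc_ae_eq_Icc.inter (ae_eq_refl W)), occupationTime, ← hshift,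
      measureReal_def, measureReal_def, measure_preimage_add_right]
  change volume.real (Icc 0 (s + T) ∩ W) = volume.real (Icc 0 s ∩ W) + _
  rw [hsplit, measureReal_union hdisjoint (measurableSet_Ioc.inter hW)
    (measure_ne_top_of_subset inter_subset_left measure_Icc_lt_top.ne)
    (measure_ne_top_of_subset inter_subset_left measure_Ioc_lt_top.ne), htail]

theorem abs_occupationTime_flow_sub_le_of_nonneg (hU : MeasurableSet U) {s T : ℝ} (hs : 0 ≤ s)
    (hT : 0 ≤ T) : |occupationTime φ U T (φ s v) - occupationTime φ U T v| ≤ s := by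
  have hcocycle := occupationTime_add (φ := φ) (v := v) hU hs hT
  rw [add_comm s T, occupationTime_add hU hT hs] at hcocycle
  have hinitial : occupationTime φ U s v ∈ Icc 0 s :=
    ⟨occupationTime_nonneg s, occupationTime_le hs⟩
  have hfinal : occupationTime φ U s (φ T v) ∈ Icc 0 s :=
    ⟨occupationTime_nonneg s, occupationTime_le hs⟩
  rw [abs_le]
  constructor <;> linarith [hinitial.1, hinitial.2, hfinal.1, hfinal.2]

theorem abs_occupationTime_flow_sub_le (hU : MeasurableSet U) (s : ℝ) {T : ℝ} (hT : 0 ≤ T) :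
    |occupationTime φ U T (φ s v) - occupationTime φ U T v| ≤ |s| := by
  rcases le_total 0 s with hs | hs
  · rw [abs_of_nonneg hs]
    exact abs_occupationTime_flow_sub_le_of_nonneg hU hs hT
  · have hback : φ (-s) (φ s v) = v := by rw [← φ.map_add, neg_add_cancel, φ.map_zero_apply]
    rw [abs_of_nonpos hs, abs_sub_comm]
    simpa only [hback] using
      abs_occupationTime_flow_sub_le_of_nonneg (φ := φ) (v := φ s v) hU (neg_nonneg.2 hs) hT

theorem birkhoffSum_occupationTime_one (hU : MeasurableSet U) (n : ℕ) (v : X) :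
    birkhoffSum (φ 1) (occupationTime φ U 1) n v = occupationTime φ U n v := by
  induction n generalizing v with
  | zero =>
    rw [birkhoffSum_zero, Nat.cast_zero]
    exact (occupationTime_nonneg 0).antisymm (occupationTime_le le_rfl)
  | succ n ih =>
    rw [birkhoffSum_succ', ih, Nat.cast_succ, add_comm (n : ℝ) 1,
      occupationTime_add hU zero_le_one n.cast_nonneg]

theorem measurableSet_setOf_flow_mem (φ : Flow ℝ X) (hU : MeasurableSet U) (T : ℝ) :
    MeasurableSet {p : X × ℝ | p.2 ∈ Icc 0 T ∧ φ p.2 p.1 ∈ U} :=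
  (measurable_snd measurableSet_Icc).inter
    ((φ.continuous continuous_snd continuous_fst).measurable hU)

theorem measurable_occupationTime (hU : MeasurableSet U) (T : ℝ) :
    Measurable (occupationTime φ U T) :=
  (measurable_measure_prodMk_left (measurableSet_setOf_flow_mem φ hU T)).ennreal_toReal

theorem integrable_occupationTime (hU : MeasurableSet U) {T : ℝ} (hT : 0 ≤ T) (μ : Measure X)
    [IsFiniteMeasure μ] : Integrable (occupationTime φ U T) μ :=
  Integrable.of_bound (measurable_occupationTime hU T).aestronglyMeasurable T
    (Eventually.of_forall fun _ =>
      (Real.norm_of_nonneg (occupationTime_nonneg T)).trans_le (occupationTime_le hT))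

theorem integral_occupationTime (hU : MeasurableSet U) {μ : Measure X} [SFinite μ]
    (hinv : ∀ t, MeasurePreserving (φ t) μ μ) {T : ℝ} (hT : 0 ≤ T) :
    ∫ v, occupationTime φ U T v ∂μ = T * μ.real U := by
  set S : Set (X × ℝ) := {p | p.2 ∈ Icc 0 T ∧ φ p.2 p.1 ∈ U}
  have hS : MeasurableSet S := measurableSet_setOf_flow_mem φ hU T
  have hfiber (t : ℝ) : μ ((fun v => (v, t)) ⁻¹' S) = (Icc 0 T).indicator (fun _ => μ U) t := by
    by_cases ht : t ∈ Icc 0 T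
    · rw [indicator_of_mem ht, ← (hinv t).measure_preimage hU.nullMeasurableSet]
      congr 1
      ext v
      exact and_iff_right ht
    · rw [indicator_of_notMem ht, ← measure_empty (μ := μ)]
      congr 1
      exact eq_empty_of_forall_notMem fun v hv => ht hv.1
  have hprod : μ.prod volume S = μ U * ENNReal.ofReal T := by
    simp only [Measure.prod_apply_symm hS, hfiber, lintegral_indicator_const measurableSet_Icc,
      Real.volume_Icc, sub_zero]
  calc
    ∫ v, occupationTime φ U T v ∂μ = (∫⁻ v, volume (Prod.mk v ⁻¹' S) ∂μ).toReal :=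
      integral_toReal (measurable_measure_prodMk_left hS).aemeasurable
        (Eventually.of_forall fun v =>
          (measure_mono fun t ht => ht.1).trans_lt measure_Icc_lt_top)
    _ = T * μ.real U := by
      rw [← Measure.prod_apply hS, hprod, toReal_mul, toReal_ofReal hT, mul_comm, measureReal_def]

end OccupationTime

section LowerFrequency

variable {X : Type*} [TopologicalSpace X] {φ : Flow ℝ X} {U : Set X} {c : ℝ} {v : X}

/-- The lower asymptotic frequency with which the forward orbit of `v` visits `U`. -/
noncomputable def lowerVisitFrequency (φ : Flow ℝ X) (U : Set X) (v : X) : ℝ :=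
  liminf (fun T : ℝ => occupationTime φ U T v / T) atTop

/-- The points whose occupation time of `U` exceeds `c * n` by an amount tending to infinity with
the integer time `n`. This is a measurable and exactly flow-invariant substitute for the set of
points at which the lower visit frequency of `U` is larger than `c`. -/
def surplusSet (φ : Flow ℝ X) (U : Set X) (c : ℝ) : Set X :=
  {v | Tendsto (fun n : ℕ => occupationTime φ U n v - c * n) atTop atTop}

theorem exists_pos_visit_of_lowerVisitFrequency_pos (hvU : v ∉ U)
    (hpos : 0 < lowerVisitFrequency φ U v) : ∃ t, 0 < t ∧ φ t v ∈ U := by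
  contrapose! hpos
  have hnever (t : ℝ) (ht : 0 ≤ t) : φ t v ∉ U := by
    rcases ht.eq_or_lt with rfl | ht
    · rwa [φ.map_zero_apply]
    · exact hpos t ht
  simp only [lowerVisitFrequency, occupationTime_eq_zero hnever, zero_div, liminf_const, le_refl]

theorem le_lowerVisitFrequency_of_eventually_le
    (h : ∀ᶠ T in atTop, c * T ≤ occupationTime φ U T v) : c ≤ lowerVisitFrequency φ U v := by
  have hbounded : IsBoundedUnder (· ≤ ·) atTop fun T : ℝ => occupationTime φ U T v / T := by
    refine isBoundedUnder_of_eventually_le (a := 1) ?_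
    filter_upwards [eventually_ge_atTop 0] with T hT
    exact div_le_one_of_le₀ (occupationTime_le hT) hT
  refine le_liminf_of_le hbounded.isCoboundedUnder_ge ?_
  filter_upwards [h, eventually_gt_atTop 0] with T hT hT_pos
  exact (le_div_iff₀ hT_pos).2 hT

theorem le_lowerVisitFrequency_of_mem_surplusSet (hv : v ∈ surplusSet φ U c) :
    c ≤ lowerVisitFrequency φ U v := by
  refine le_lowerVisitFrequency_of_eventually_le ?_
  have hfloor : ∀ᶠ T : ℝ in atTop, |c| ≤ occupationTime φ U ⌊T⌋₊ v - c * ⌊T⌋₊ :=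
    tendsto_nat_floor_atTop.eventually (Tendsto.eventually_ge_atTop hv |c|)
  filter_upwards [hfloor, eventually_ge_atTop 0] with T hsurplus hT
  have hfract : |T - ⌊T⌋₊| ≤ 1 :=
    abs_le.2 ⟨by linarith [Nat.floor_le hT], by linarith [Nat.lt_floor_add_one T]⟩
  calc
    c * T = c * ⌊T⌋₊ + c * (T - ⌊T⌋₊) := by ring
    _ ≤ c * ⌊T⌋₊ + |c| := by
      gcongr
      exact (le_abs_self _).trans <|
        (abs_mul c _).trans_le (mul_le_of_le_one_right (abs_nonneg c) hfract)
    _ ≤ occupationTime φ U ⌊T⌋₊ v := by linarith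
    _ ≤ occupationTime φ U T v := occupationTime_mono (Nat.floor_le hT)

variable [MeasurableSpace X] [BorelSpace X]

theorem measurableSet_surplusSet (hU : MeasurableSet U) (c : ℝ) :
    MeasurableSet (surplusSet φ U c) :=
  measurableSet_tendsto atTop fun n => (measurable_occupationTime hU n).sub_const (c * n)

theorem mem_surplusSet_of_flow_mem (hU : MeasurableSet U) {s : ℝ}
    (hv : φ s v ∈ surplusSet φ U c) : v ∈ surplusSet φ U c := by
  refine tendsto_atTop_mono (fun n => ?_) (tendsto_atTop_add_const_right _ (-|s|) hv)
  have := (abs_le.1 (abs_occupationTime_flow_sub_le (φ := φ) (v := v) hU s n.cast_nonneg)).2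
  linarith

theorem flow_mem_surplusSet_iff (hU : MeasurableSet U) (s : ℝ) :
    φ s v ∈ surplusSet φ U c ↔ v ∈ surplusSet φ U c := by
  have hback : φ (-s) (φ s v) = v := by rw [← φ.map_add, neg_add_cancel, φ.map_zero_apply]
  exact ⟨mem_surplusSet_of_flow_mem hU,
    fun hv => mem_surplusSet_of_flow_mem (s := -s) hU (by rwa [hback])⟩

theorem flow_preimage_surplusSet (hU : MeasurableSet U) (c s : ℝ) :
    φ s ⁻¹' surplusSet φ U c = surplusSet φ U c := by
  ext v
  rw [mem_preimage, flow_mem_surplusSet_iff hU]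

theorem exists_birkhoffSum_pos_of_notMem_surplusSet (hU : MeasurableSet U) {d : ℝ} (hcd : c < d)
    (hv : v ∉ surplusSet φ U c) :
    ∃ n, 0 < birkhoffSum (φ 1) (fun w => d - occupationTime φ U 1 w) n v := by
  contrapose! hv
  refine tendsto_atTop_mono (fun n => ?_)
    (tendsto_natCast_atTop_atTop.const_mul_atTop (sub_pos.2 hcd))
  have hsum : birkhoffSum (φ 1) (fun w => d - occupationTime φ U 1 w) n v
      = n * d - occupationTime φ U n v := by
    rw [← birkhoffSum_occupationTime_one hU, ← nsmul_eq_mul]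
    simp only [birkhoffSum, Finset.sum_sub_distrib, Finset.sum_const, Finset.card_range]
  have := hsum ▸ hv n
  linarith

end LowerFrequency

section FlowErgodic

variable {X : Type*} [TopologicalSpace X] [MeasurableSpace X] {φ : Flow ℝ X} {U V : Set X}

/-- Ergodicity of a measure for a flow: `μ` is invariant, and every measurable set that is
invariant up to null sets under each time-`t` map has measure `0` or `1`. -/
def FlowErgodic (φ : Flow ℝ X) (μ : Measure X) : Prop :=
  (∀ t : ℝ, MeasurePreserving (φ t) μ μ) ∧
    ∀ A : Set X, MeasurableSet A → (∀ t : ℝ, (φ t ⁻¹' A : Set X) =ᵐ[μ] A) → μ A = 0 ∨ μ A = 1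

variable [BorelSpace X] {μ : Measure X} [IsProbabilityMeasure μ]

theorem FlowErgodic.ae_mem_surplusSet (hμ : FlowErgodic φ μ) (hU : MeasurableSet U) {c : ℝ}
    (hc : c < μ.real U) : ∀ᵐ v ∂μ, v ∈ surplusSet φ U c := by
  have hA : MeasurableSet (surplusSet φ U c) := measurableSet_surplusSet hU c
  rcases hμ.2 _ hA fun t => .of_eq (flow_preimage_surplusSet hU c t) with hnull | hfull
  · exfalso
    obtain ⟨d, hcd, hd⟩ := exists_between hc
    have hocc : Integrable (occupationTime φ U 1) μ := integrable_occupationTime hU zero_le_one μ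
    have hpos : ∀ᵐ v ∂μ, ∃ n, 0 < birkhoffSum (φ 1) (fun w => d - occupationTime φ U 1 w) n v :=
      (measure_eq_zero_iff_ae_notMem.1 hnull).mono fun v hv =>
        exists_birkhoffSum_pos_of_notMem_surplusSet hU hcd hv
    have hnonneg : 0 ≤ d - μ.real U :=
      calc
        0 ≤ ∫ v, d - occupationTime φ U 1 v ∂μ :=
          integral_nonneg_of_ae_exists_birkhoffSum_pos (hμ.1 1) ((integrable_const d).sub hocc) hpos
        _ = d - μ.real U := by
          rw [integral_sub (integrable_const d) hocc,
            integral_occupationTime hU hμ.1 zero_le_one, integral_const, probReal_univ, one_smul,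
            one_mul]
    linarith
  · exact (mem_ae_iff_prob_eq_one (μ := μ) hA).2 hfull

theorem FlowErgodic.ae_measureReal_le_lowerVisitFrequency (hμ : FlowErgodic φ μ)
    (hU : MeasurableSet U) : ∀ᵐ v ∂μ, μ.real U ≤ lowerVisitFrequency φ U v := by
  have hrational : ∀ᵐ v ∂μ, ∀ q : ℚ, (q : ℝ) < μ.real U → (q : ℝ) ≤ lowerVisitFrequency φ U v :=
    ae_all_iff.2 fun q => eventually_imp_distrib_left.2 fun hq =>
      (hμ.ae_mem_surplusSet hU hq).mono fun _ => le_lowerVisitFrequency_of_mem_surplusSet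
  exact hrational.mono fun v hv => le_of_forall_rat_lt_imp_le hv

theorem FlowErgodic.measure_eq_zero_of_lowerVisitFrequency_le (hμ : FlowErgodic φ μ)
    (hU : MeasurableSet U) (hUV : Disjoint U V) {κ : ℝ} (hκ : 0 ≤ κ)
    (hfreq : ∀ v ∈ V, (∃ t, 0 < t ∧ φ t v ∈ U) → lowerVisitFrequency φ U v ≤ κ)
    (hμU : κ < μ.real U) : μ V = 0 := by
  rw [measure_eq_zero_iff_ae_notMem]
  filter_upwards [hμ.ae_measureReal_le_lowerVisitFrequency hU] with v hv hvV
  have hκv : κ < lowerVisitFrequency φ U v := hμU.trans_le hv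
  have hvisit : ∃ t, 0 < t ∧ φ t v ∈ U :=
    exists_pos_visit_of_lowerVisitFrequency_pos (disjoint_right.1 hUV hvV) (hκ.trans_lt hκv)
  exact hκv.not_ge (hfreq v hvV hvisit)

end FlowErgodic

section WeakClosure

variable {X : Type*} [TopologicalSpace X] [HasOuterApproxClosed X] [MeasurableSpace X]

theorem eventually_lt_measure_of_isOpen [OpensMeasurableSpace X] {P : ProbabilityMeasure X}
    {G : Set X} (hG : IsOpen G) {r : ℝ≥0∞} (hr : r < (P : Measure X) G) :
    ∀ᶠ Q : ProbabilityMeasure X in nhds P, r < (Q : Measure X) G :=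
  eventually_lt_of_lt_liminf <|
    hr.trans_le (ProbabilityMeasure.le_liminf_measure_open_of_tendsto tendsto_id hG)

variable [BorelSpace X] {φ : Flow ℝ X} {U V : Set X}

theorem notMem_closure_flowErgodic (hU : IsOpen U) (hV : IsOpen V) (hUV : Disjoint U V) {κ : ℝ}
    (hκ : 0 ≤ κ) (hfreq : ∀ v ∈ V, (∃ t, 0 < t ∧ φ t v ∈ U) → lowerVisitFrequency φ U v ≤ κ)
    {P : ProbabilityMeasure X} (hPU : κ < (P : Measure X).real U) (hPV : (P : Measure X) V ≠ 0) :
    P ∉ closure {Q : ProbabilityMeasure X | FlowErgodic φ (Q : Measure X)} := by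
  have hlt (Q : ProbabilityMeasure X) :
      ENNReal.ofReal κ < (Q : Measure X) U ↔ κ < (Q : Measure X).real U :=
    ofReal_lt_iff_lt_toReal hκ (measure_ne_top _ U)
  intro hclosure
  obtain ⟨Q, hQ, hQU, hQV⟩ := ((mem_closure_iff_frequently.1 hclosure).and_eventually <|
    (eventually_lt_measure_of_isOpen hU ((hlt P).2 hPU)).and
      (eventually_lt_measure_of_isOpen hV (pos_iff_ne_zero.2 hPV))).exists
  exact hQV.ne' <| hQ.measure_eq_zero_of_lowerVisitFrequency_le hU.measurableSet hUV hκ hfreq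
    ((hlt Q).1 hQU)

theorem ergodic_nongeneric_stmt5_general (hU : IsOpen U) (hV : IsOpen V) (hUV : Disjoint U V)
    {κ : ℝ} (hκ : 0 ≤ κ)
    (hfreq : ∀ v ∈ V, (∃ t, 0 < t ∧ φ t v ∈ U) → lowerVisitFrequency φ U v ≤ κ)
    {μx μy : Measure X} [IsProbabilityMeasure μx] [IsProbabilityMeasure μy]
    (hinvx : ∀ t : ℝ, MeasurePreserving (φ t) μx μx)
    (hinvy : ∀ t : ℝ, MeasurePreserving (φ t) μy μy)
    (hxU : μx U = 1) (hyV : μy V = 1)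
    {a b : ℝ≥0∞} (hab : a + b = 1) (hκa : κ < a.toReal) (hb : b ≠ 0) :
    IsProbabilityMeasure (a • μx + b • μy) ∧
    (∀ t : ℝ, MeasurePreserving (φ t) (a • μx + b • μy) (a • μx + b • μy)) ∧
    (∀ P : ProbabilityMeasure X, (P : Measure X) = a • μx + b • μy →
      P ∉ closure {Q : ProbabilityMeasure X | FlowErgodic φ (Q : Measure X)}) := by
  refine ⟨⟨by simp [hab]⟩,
    fun t => ((hinvx t).smul_measure a).add_measure ((hinvy t).smul_measure b), fun P hP => ?_⟩
  have haU : a ≤ (P : Measure X) U := by simp [hP, hxU]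
  have hbV : b ≤ (P : Measure X) V := by simp [hP, hyV]
  have hPU : κ < (P : Measure X).real U :=
    hκa.trans_le (toReal_mono (measure_ne_top _ U) haU)
  exact notMem_closure_flowErgodic hU hV hUV hκ hfreq hPU ((pos_iff_ne_zero.2 hb).trans_le hbV).ne'

end WeakClosure

/-- Abstract form of Proposition 1. Under the recurrence-excursion liminf
hypothesis on the open set `U` (disjoint from the open set `V`), if `μx`, `μy` are
φ-invariant ergodic Borel probability measures with `μx U = 1` and `μy V = 1`, then
`μ = (3/4) μx + (1/4) μy` is a φ-invariant probability measure which does not lie in the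
closure (for the topology of weak convergence) of the set of φ-invariant ergodic
probability measures. -/
theorem ergodic_nongeneric_stmt5 {X : Type*} [TopologicalSpace X]
    [TopologicalSpace.MetrizableSpace X] [MeasurableSpace X] [BorelSpace X]
    (φ : Flow ℝ X) (U V : Set X) (hU : IsOpen U) (hV : IsOpen V) (hUV : U ∩ V = ∅)
    (hlim : ∀ v : X, v ∉ U → {t : ℝ | 0 < t ∧ φ t v ∈ U}.Nonempty →
      liminf (fun T : ℝ => (volume {t ∈ Icc (0 : ℝ) T | φ t v ∈ U}).toReal / T) atTop
        ≤ 2 / 3)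
    (μx μy : Measure X) [IsProbabilityMeasure μx] [IsProbabilityMeasure μy]
    (hinvx : ∀ t : ℝ, MeasurePreserving (φ t) μx μx)
    (hinvy : ∀ t : ℝ, MeasurePreserving (φ t) μy μy)
    (hergx : ∀ A : Set X, MeasurableSet A → (∀ t : ℝ, (φ t ⁻¹' A : Set X) =ᵐ[μx] A) →
      μx A = 0 ∨ μx A = 1)
    (hergy : ∀ A : Set X, MeasurableSet A → (∀ t : ℝ, (φ t ⁻¹' A : Set X) =ᵐ[μy] A) →
      μy A = 0 ∨ μy A = 1)
    (hxU : μx U = 1) (hyV : μy V = 1) :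
    IsProbabilityMeasure ((3 / 4 : ℝ≥0∞) • μx + (1 / 4 : ℝ≥0∞) • μy) ∧
    (∀ t : ℝ, MeasurePreserving (φ t)
      ((3 / 4 : ℝ≥0∞) • μx + (1 / 4 : ℝ≥0∞) • μy)
      ((3 / 4 : ℝ≥0∞) • μx + (1 / 4 : ℝ≥0∞) • μy)) ∧
    (∀ P : ProbabilityMeasure X,
      (P : Measure X) = (3 / 4 : ℝ≥0∞) • μx + (1 / 4 : ℝ≥0∞) • μy →
      P ∉ closure {Q : ProbabilityMeasure X |
        (∀ t : ℝ, MeasurePreserving (φ t) (Q : Measure X) (Q : Measure X)) ∧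
        (∀ A : Set X, MeasurableSet A →
          (∀ t : ℝ, (φ t ⁻¹' A : Set X) =ᵐ[(Q : Measure X)] A) →
          (Q : Measure X) A = 0 ∨ (Q : Measure X) A = 1)}) :=
  ergodic_nongeneric_stmt5_general hU hV (disjoint_iff_inter_eq_empty.2 hUV) (by norm_num)
    (fun v hvV => hlim v fun hvU => hUV.le ⟨hvU, hvV⟩) hinvx hinvy hxU hyV
    (by rw [ENNReal.div_add_div_same, ENNReal.div_eq_one_iff] <;> norm_num)
    (by rw [toReal_div]; norm_num) (by norm_num)
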